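/- arXiv:1703.06624 — 2 statements merged into one kernel-verified Lean document; each statement's English description precedes it below -/
import Mathlib

section
/- Let a > 0 and n, m ∈ ℕ. Then (2a²/π)·∫_{−1}^{1} Ch_n(λ;a)·Ch_m(λ;a)·√(1 − λ²)/(a⁴ − 4(a² − 1)λ²) dλ = δ_{n,m} − I_a(n,m), where δ_{n,m} is the Kronecker delta, I_a(n,m) = 0 if a ≤ √2, and, if a > √2, I_a(n,m) = ((a² − 2)/(2(a² − 1)))·(Ch_n(λ₊;a)·Ch_m(λ₊;a) + Ch_n(λ₋;a)·Ch_m(λ₋;a)) with λ_± = ±a²/(2√(a² − 1)). -/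
/-- The generalized Chebyshev polynomials `Ch_n(x; a)`:
`Ch_0 = 1`, `Ch_1 = 2x/a`, `Ch_2 = 2x·Ch_1 − a`, and
`Ch_{n+1} = 2x·Ch_n − Ch_{n−1}` for `n ≥ 2`. -/
noncomputable def Ch (a x : ℝ) : ℕ → ℝ
  | 0 => 1
  | 1 => 2 * x / a
  | 2 => 2 * x * (2 * x / a) - a
  | n + 3 => 2 * x * Ch a x (n + 2) - Ch a x (n + 1)

open Polynomial intervalIntegral MeasureTheory Filter Topology
open Polynomial.Chebyshev hiding C C_mul

namespace GenChebyshev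

/-! ### Orthonormality for an abstract functional -/

/-- The generalized Chebyshev polynomials as elements of `ℝ[X]`. -/
noncomputable def chPoly (a : ℝ) : ℕ → ℝ[X]
  | 0 => 1
  | 1 => C (2 / a) * X
  | 2 => 2 * X * (C (2 / a) * X) - C a
  | n + 3 => 2 * X * chPoly a (n + 2) - chPoly a (n + 1)

theorem eval_chPoly (a x : ℝ) (n : ℕ) : (chPoly a n).eval x = Ch a x n := by
  induction n using Nat.strong_induction_on with
  | _ n ih =>
    match n with
    | 0 => simp [chPoly, Ch]
    | 1 => simp [chPoly, Ch, div_mul_eq_mul_div]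
    | 2 => simp [chPoly, Ch, div_mul_eq_mul_div]
    | n + 3 => simp [chPoly, Ch, ih (n + 2) (by lia), ih (n + 1) (by lia)]

/-- The off-diagonal entries of the Jacobi operator. -/
noncomputable def offDiag (a : ℝ) : ℕ → ℝ
  | 0 => a / 2
  | _ + 1 => 1 / 2

theorem offDiag_pos {a : ℝ} (ha : 0 < a) (n : ℕ) : 0 < offDiag a n := by
  cases n <;> simp [offDiag, ha]

theorem X_mul_chPoly_zero {a : ℝ} (ha : a ≠ 0) :
    X * chPoly a 0 = offDiag a 0 • chPoly a 1 := by
  simp only [chPoly, offDiag, smul_eq_C_mul, ← mul_assoc, ← C_mul]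
  rw [show a / 2 * (2 / a) = 1 by field_simp]
  simp

theorem X_mul_chPoly_succ (a : ℝ) (n : ℕ) :
    X * chPoly a (n + 1) = offDiag a n • chPoly a n + offDiag a (n + 1) • chPoly a (n + 2) := by
  have half : (2 : ℝ[X]) * C (1 / 2) = 1 := by
    rw [show (2 : ℝ[X]) = C 2 from rfl, ← C_mul]; norm_num
  cases n with
  | zero =>
    have : C (a / 2) = C (1 / 2) * C a := by rw [← C_mul]; ring_nf
    simp only [chPoly, offDiag, smul_eq_C_mul, this]
    linear_combination (-X ^ 2 * C (2 / a)) * half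
  | succ n =>
    simp only [chPoly, offDiag, smul_eq_C_mul]
    linear_combination (-X * chPoly a (n + 2)) * half

/-- A functional that integrates the orthonormal polynomials correctly makes them orthonormal. -/
theorem apply_chPoly_mul_chPoly {a : ℝ} (ha : 0 < a) (L : ℝ[X] →ₗ[ℝ] ℝ)
    (hL : ∀ n, L (chPoly a n) = if n = 0 then 1 else 0) (n m : ℕ) :
    L (chPoly a n * chPoly a m) = if n = m then 1 else 0 := by
  have key : ∀ n m, L (X * chPoly a n * chPoly a m) = L (chPoly a n * (X * chPoly a m)) :=
    fun n m ↦ by ring_nf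
  have zero_row : ∀ m, L (chPoly a 0 * chPoly a m) = if 0 = m then 1 else 0 := fun m ↦ by
    simpa [chPoly, eq_comm] using hL m
  have h0 := X_mul_chPoly_zero ha.ne'
  have hs := X_mul_chPoly_succ a
  induction n using Nat.twoStepInduction generalizing m with
  | zero => exact zero_row m
  | one =>
    have := key 0 m
    rw [h0] at this
    apply mul_left_cancel₀ (offDiag_pos ha 0).ne'
    cases m with
    | zero =>
      rw [h0] at this
      simp only [smul_mul_assoc, mul_smul_comm, map_smul, zero_row, smul_eq_mul] at this
      simpa using this
    | succ m =>
      rw [hs] at this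
      simp only [smul_mul_assoc, mul_smul_comm, mul_add, map_add, map_smul, zero_row,
        smul_eq_mul] at this
      rw [this]
      rcases m with _ | m <;> simp
  | more n ih1 ih2 =>
    have := key (n + 1) m
    rw [hs] at this
    apply mul_left_cancel₀ (offDiag_pos ha (n + 1)).ne'
    cases m with
    | zero =>
      rw [h0] at this
      simp only [smul_mul_assoc, mul_smul_comm, add_mul, map_add, map_smul, ih1, ih2,
        smul_eq_mul] at this
      rcases n with _ | n <;> simp_all
    | succ m =>
      rw [hs] at this
      simp only [smul_mul_assoc, mul_smul_comm, add_mul, mul_add, map_add, map_smul, ih1, ih2,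
        smul_eq_mul] at this
      rcases eq_or_ne n m with rfl | h1
      · simp_all
      · rcases eq_or_ne n (m + 1) with rfl | h2
        · simp_all [show m + 1 + 1 ≠ m by lia]
        · rcases eq_or_ne m (n + 1) with rfl | h3
          · simp_all
          · simp_all [show n + 1 + 1 ≠ m + 1 by lia, eq_comm]

/-- The polynomial in the denominator of the weight, with `c = a ^ 2 - 1`. -/
noncomputable def denom (c : ℝ) : ℝ[X] := C ((1 + c) ^ 2) - C (4 * c) * X ^ 2

/-- The combinations `U_k - c U_{k-2}` of Chebyshev polynomials of the second kind. -/
noncomputable def uComb (c : ℝ) (k : ℤ) : ℝ[X] := U ℝ k - C c * U ℝ (k - 2)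

theorem denom_mul_U (c : ℝ) (k : ℤ) :
    denom c * U ℝ k = uComb c k - C c * uComb c (k + 2) := by
  have h1 := U_add_two ℝ k
  have h2 := U_add_one ℝ k
  have h3 := U_eq ℝ k
  have h4 : C ((1 + c) ^ 2) = (1 + C c) ^ 2 := by simp
  have h5 : C (4 * c) = 4 * C c := by rw [C_mul]; rfl
  rw [denom, uComb, uComb, add_sub_cancel_right, h4, h5]
  linear_combination C c * h1 + 2 * X * C c * h2 + C c * h3

theorem uComb_zero (c : ℝ) : uComb c 0 = (1 + c) • 1 := by
  simp [uComb, smul_eq_C_mul]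

theorem smul_chPoly_succ {a : ℝ} (ha : a ≠ 0) (n : ℕ) :
    a • chPoly a (n + 1) = uComb (a ^ 2 - 1) (n + 1 : ℕ) := by
  have hC : C a * C (2 / a) = 2 := by rw [← C_mul, mul_div_cancel₀ _ ha]; rfl
  rw [smul_eq_C_mul]
  induction n using Nat.twoStepInduction with
  | zero =>
    simp only [chPoly, uComb]
    norm_num
    linear_combination X * hC
  | one =>
    simp only [chPoly, uComb]
    norm_num [U_two]
    linear_combination 2 * X ^ 2 * hC
  | more n ih1 ih2 =>
    have h1 := U_eq ℝ ((n : ℤ) + 3)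
    have h2 := U_eq ℝ ((n : ℤ) + 1)
    simp only [chPoly, uComb, Nat.cast_add, Nat.cast_one, Nat.cast_ofNat] at ih1 ih2 ⊢
    ring_nf at h1 h2 ih1 ih2 ⊢
    linear_combination 2 * X * ih2 - ih1 - h1 + C (-1 + a ^ 2) * h2

theorem chPoly_comp_neg_X (a : ℝ) (n : ℕ) :
    (chPoly a n).comp (-X) = (-1) ^ n * chPoly a n := by
  induction n using Nat.strong_induction_on with
  | _ n ih =>
    match n with
    | 0 => simp [chPoly]
    | 1 => simp [chPoly]
    | 2 => simp [chPoly]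
    | n + 3 =>
      simp [chPoly, ih (n + 2) (by lia), ih (n + 1) (by lia)]
      ring

/-- A normalized even functional dual to `denom (a ^ 2 - 1) * U_k` is dual to `chPoly a`. -/
theorem apply_chPoly {a : ℝ} (ha : 0 < a) (L : ℝ[X] →ₗ[ℝ] ℝ) (h1 : L 1 = 1)
    (hD : ∀ k : ℕ, L (denom (a ^ 2 - 1) * U ℝ k) = if k = 0 then a ^ 2 else 0)
    (hodd : ∀ p : ℝ[X], p.comp (-X) = -p → L p = 0) (n : ℕ) :
    L (chPoly a n) = if n = 0 then 1 else 0 := by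
  have step : ∀ k : ℕ, L (uComb (a ^ 2 - 1) k) - (a ^ 2 - 1) * a * L (chPoly a (k + 2)) =
      if k = 0 then a ^ 2 else 0 := fun k ↦ by
    have := hD k
    rw [denom_mul_U, ← smul_eq_C_mul, map_sub, map_smul,
      show (k : ℤ) + 2 = ((k + 1 + 1 : ℕ) : ℤ) by push_cast; ring, ← smul_chPoly_succ ha.ne',
      map_smul] at this
    simpa [mul_assoc] using this
  have hV : ∀ k : ℕ, L (uComb (a ^ 2 - 1) (k + 1 : ℕ)) = a * L (chPoly a (k + 1)) := fun k ↦ by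
    rw [← smul_chPoly_succ ha.ne', map_smul, smul_eq_mul]
  have hstep : ∀ k : ℕ, L (chPoly a (k + 1)) = (a ^ 2 - 1) * L (chPoly a (k + 3)) := fun k ↦ by
    have := step (k + 1)
    rw [hV] at this
    apply mul_left_cancel₀ ha.ne'
    simp at this
    linear_combination this
  rcases Nat.even_or_odd n with hn | hn
  · obtain ⟨j, rfl⟩ := hn
    rw [← two_mul]
    induction j with
    | zero => simpa [chPoly] using h1
    | succ j ih =>
      rw [if_neg (by lia)]
      rcases eq_or_ne (a ^ 2 - 1) 0 with hc | hc
      · rw [show 2 * (j + 1) = 2 * j + 1 + 1 by ring, hstep, hc, zero_mul]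
      · cases j with
        | zero =>
          have := step 0
          rw [Nat.cast_zero, uComb_zero, map_smul, h1] at this
          have h : (a ^ 2 - 1) * a * L (chPoly a (0 + 2)) = 0 := by
            simp at this ⊢; simpa [ha.ne', hc] using this
          simpa [ha.ne', hc] using h
        | succ j =>
          rw [if_neg (by lia)] at ih
          have := hstep (2 * j + 1)
          rw [show 2 * j + 1 + 1 = 2 * (j + 1) by ring, ih] at this
          exact (mul_eq_zero.mp this.symm).resolve_left hc
  · rw [if_neg hn.pos.ne']
    exact hodd _ (by rw [chPoly_comp_neg_X, hn.neg_one_pow]; ring)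

/-! ### The weight -/

/-- The absolutely continuous weight, with `c = a ^ 2 - 1`, up to normalization. -/
noncomputable def weight (c x : ℝ) : ℝ := √(1 - x ^ 2) / ((1 + c) ^ 2 - 4 * c * x ^ 2)

theorem sq_le_one_of_mem_uIcc {x : ℝ} (hx : x ∈ Set.uIcc (-1 : ℝ) 1) : x ^ 2 ≤ 1 := by
  rw [Set.uIcc_of_le (by norm_num), Set.mem_Icc] at hx
  nlinarith

theorem one_sub_abs_sq_le (c : ℝ) {x : ℝ} (hx : x ^ 2 ≤ 1) :
    (1 - |c|) ^ 2 ≤ (1 + c) ^ 2 - 4 * c * x ^ 2 := by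
  rcases le_total 0 c with h | h
  · rw [abs_of_nonneg h]; nlinarith
  · rw [abs_of_nonpos h]; nlinarith [sq_nonneg x]

theorem weight_one (x : ℝ) : weight 1 x = 1 / 4 * √(1 - x ^ 2)⁻¹ := by
  rw [weight, Real.sqrt_inv, ← Real.sqrt_div_self, show (1 + 1 : ℝ) ^ 2 - 4 * 1 * x ^ 2 =
    4 * (1 - x ^ 2) by ring, mul_comm, div_mul_eq_div_div]
  ring

theorem denom_mul_weight {c x : ℝ} (hc : -1 < c) (hx : x ^ 2 ≤ 1) :
    (denom c).eval x * weight c x = √(1 - x ^ 2) := by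
  have h := one_sub_abs_sq_le c hx
  simp only [denom, weight, eval_sub, eval_mul, eval_C, eval_pow, eval_X]
  rcases eq_or_ne ((1 + c) ^ 2 - 4 * c * x ^ 2) 0 with h0 | h0
  · have habs : |c| = 1 := by nlinarith [sq_nonneg (1 - |c|)]
    obtain rfl : c = 1 := by
      rcases eq_or_eq_neg_of_abs_eq habs with h | h
      · exact h
      · linarith
    rw [show x ^ 2 = 1 by linarith]
    simp
  · exact mul_div_cancel₀ _ h0

theorem intervalIntegrable_weight {c : ℝ} (hc : -1 < c) :
    IntervalIntegrable (weight c) volume (-1) 1 := by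
  rcases eq_or_ne c 1 with rfl | h1
  · simp only [funext weight_one]
    exact intervalIntegrable_sqrt_one_sub_sq_inv.const_mul _
  · refine ContinuousOn.intervalIntegrable fun x hx ↦ ContinuousAt.continuousWithinAt ?_
    have habs : 1 - |c| ≠ 0 := fun h ↦ by
      rcases eq_or_eq_neg_of_abs_eq (sub_eq_zero.mp h).symm with h | h
      · exact h1 h
      · linarith
    have hpos : 0 < (1 + c) ^ 2 - 4 * c * x ^ 2 :=
      (by positivity : 0 < (1 - |c|) ^ 2).trans_le (one_sub_abs_sq_le c (sq_le_one_of_mem_uIcc hx))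
    unfold weight
    exact ContinuousAt.div (by fun_prop) (by fun_prop) hpos.ne'

theorem intervalIntegrable_eval_mul_weight {c : ℝ} (hc : -1 < c) (p : ℝ[X]) :
    IntervalIntegrable (fun x ↦ p.eval x * weight c x) volume (-1) 1 :=
  (intervalIntegrable_weight hc).continuousOn_mul p.continuous.continuousOn

/-- Integration of polynomials against `weight c`. -/
noncomputable def weightIntegral {c : ℝ} (hc : -1 < c) : ℝ[X] →ₗ[ℝ] ℝ where
  toFun p := ∫ x in (-1 : ℝ)..1, p.eval x * weight c x
  map_add' p q := by
    simp only [eval_add, add_mul]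
    exact integral_add (intervalIntegrable_eval_mul_weight hc p)
      (intervalIntegrable_eval_mul_weight hc q)
  map_smul' r p := by simp [mul_assoc]

theorem integral_U_mul_sqrt (k : ℕ) :
    ∫ x in (-1 : ℝ)..1, (U ℝ k).eval x * √(1 - x ^ 2) = if k = 0 then Real.pi / 2 else 0 := by
  have h : ∀ x ∈ Set.uIcc (-1 : ℝ) 1, (U ℝ k).eval x * √(1 - x ^ 2) =
      ((T ℝ k).eval x - (T ℝ (k + 2)).eval x) / 2 * √(1 - x ^ 2)⁻¹ := fun x hx ↦ by
    have h1 := congrArg (eval x) (one_sub_X_sq_mul_U_eq_pol_in_T ℝ k)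
    have h2 := congrArg (eval x) (T_add_two ℝ k)
    simp only [eval_mul, eval_sub, eval_one, eval_pow, eval_X, eval_ofNat] at h1 h2
    have hs : √(1 - x ^ 2) = (1 - x ^ 2) * √(1 - x ^ 2)⁻¹ := by
      rw [Real.sqrt_inv, ← div_eq_mul_inv, Real.div_sqrt]
    rw [hs, ← mul_assoc]
    congr 1
    linear_combination h1 - h2 / 2
  rw [integral_congr h, ← integral_measureT (fun x ↦ ((T ℝ k).eval x - (T ℝ (k + 2)).eval x) / 2),
    MeasureTheory.integral_div, MeasureTheory.integral_sub
      (integrable_measureT (by fun_prop)) (integrable_measureT (by fun_prop)),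
    integral_eval_T_real_measureT_of_ne_zero (by lia : (k : ℤ) + 2 ≠ 0)]
  split_ifs with hk
  · rw [hk, Nat.cast_zero, integral_eval_T_real_measureT_zero, sub_zero]
  · rw [integral_eval_T_real_measureT_of_ne_zero (by exact_mod_cast hk)]
    simp

theorem weightIntegral_denom_mul_U {c : ℝ} (hc : -1 < c) (k : ℕ) :
    weightIntegral hc (denom c * U ℝ k) = if k = 0 then Real.pi / 2 else 0 := by
  rw [← integral_U_mul_sqrt]
  refine integral_congr fun x hx ↦ ?_
  simp only [eval_mul]
  rw [← denom_mul_weight hc (sq_le_one_of_mem_uIcc hx)]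
  ring

theorem weightIntegral_of_odd {c : ℝ} (hc : -1 < c) {p : ℝ[X]} (hp : p.comp (-X) = -p) :
    weightIntegral hc p = 0 := by
  have h := integral_comp_neg (a := -1) (b := 1) fun x ↦ p.eval x * weight c x
  have hx : ∀ x, p.eval (-x) = -p.eval x := fun x ↦ by
    simpa using congrArg (eval x) hp
  simp only [hx, weight, neg_sq, neg_neg, neg_mul, intervalIntegral.integral_neg] at h
  change ∫ x in (-1 : ℝ)..1, p.eval x * weight c x = 0
  simp only [weight]
  linarith

theorem abs_U_mul_sqrt_le (k : ℤ) {x : ℝ} (hx : x ∈ Set.Icc (-1 : ℝ) 1) :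
    |(U ℝ k).eval x * √(1 - x ^ 2)| ≤ 1 := by
  have := U_real_cos (Real.arccos x) k
  rw [Real.cos_arccos hx.1 hx.2, Real.sin_arccos] at this
  rw [this]
  exact Real.abs_sin_le_one _

theorem abs_weightIntegral_uComb_le {c : ℝ} (hc : -1 < c) (hc1 : c < 1) (k : ℤ) :
    |weightIntegral hc (uComb c k)| ≤ 2 / (1 - |c|) ^ 2 * 2 := by
  have habs : |c| < 1 := abs_lt.mpr ⟨hc, hc1⟩
  have hpos : 0 < (1 - |c|) ^ 2 := by have := sub_pos.mpr habs; positivity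
  have := norm_integral_le_of_norm_le_const (a := (-1 : ℝ)) (b := 1)
    (f := fun x ↦ (uComb c k).eval x * weight c x) (C := 2 / (1 - |c|) ^ 2) fun x hx ↦ by
      rw [Set.uIoc_of_le (by norm_num)] at hx
      have hx' : x ∈ Set.Icc (-1 : ℝ) 1 := Set.Ioc_subset_Icc_self hx
      have hD := one_sub_abs_sq_le c (x := x) (by nlinarith [hx'.1, hx'.2])
      have h1 := abs_U_mul_sqrt_le k hx'
      have h2 := abs_U_mul_sqrt_le (k - 2) hx'
      rw [weight, ← mul_div_assoc, Real.norm_eq_abs, abs_div,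
        abs_of_pos (hpos.trans_le hD)]
      refine div_le_div₀ (by norm_num) ?_ hpos hD
      rw [uComb, eval_sub, eval_mul, eval_C, sub_mul, mul_assoc]
      refine (abs_sub _ _).trans ?_
      rw [abs_mul c]
      nlinarith [abs_nonneg c]
  rw [Real.norm_eq_abs] at this
  refine this.trans (le_of_eq ?_)
  norm_num

theorem weightIntegral_one_of_lt_one {c : ℝ} (hc : -1 < c) (hc1 : c < 1) :
    weightIntegral hc 1 = Real.pi / (2 * (1 + c)) := by
  have step : ∀ k : ℕ, weightIntegral hc (uComb c k) =
      c * weightIntegral hc (uComb c (k + 2 : ℕ)) + if k = 0 then Real.pi / 2 else 0 :=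
    fun k ↦ by
      rw [← weightIntegral_denom_mul_U hc, denom_mul_U, ← smul_eq_C_mul, map_sub, map_smul]
      simp
  have iter : ∀ j : ℕ, weightIntegral hc (uComb c (2 : ℕ)) =
      c ^ j * weightIntegral hc (uComb c (2 * j + 2 : ℕ)) := fun j ↦ by
    induction j with
    | zero => simp
    | succ j ih =>
      rw [ih, step, if_neg (by lia), show 2 * j + 2 + 2 = 2 * (j + 1) + 2 by ring]
      ring
  have lim : Tendsto (fun j : ℕ ↦ c ^ j * weightIntegral hc (uComb c (2 * j + 2 : ℕ)))
      atTop (𝓝 0) :=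
    (tendsto_pow_atTop_nhds_zero_of_abs_lt_one (abs_lt.mpr ⟨hc, hc1⟩)).zero_mul_isBoundedUnder_le
      (isBoundedUnder_of ⟨_, fun j ↦ abs_weightIntegral_uComb_le hc hc1 _⟩)
  have h2 : weightIntegral hc (uComb c (2 : ℕ)) = 0 :=
    tendsto_nhds_unique (tendsto_const_nhds.congr iter) lim
  have h0 := step 0
  rw [zero_add, h2, Nat.cast_zero, uComb_zero, map_smul, smul_eq_mul, mul_zero, zero_add,
    if_pos rfl] at h0
  have : 1 + c ≠ 0 := by linarith
  field_simp
  linarith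

theorem weightIntegral_one_one : weightIntegral (c := 1) (by norm_num) 1 = Real.pi / 4 := by
  change ∫ x in (-1 : ℝ)..1, (1 : ℝ[X]).eval x * weight 1 x = _
  have h := integral_eval_T_real_measureT_zero
  rw [integral_measureT] at h
  simp only [T_zero, eval_one, one_mul] at h
  simp only [weight_one, eval_one, one_mul, intervalIntegral.integral_const_mul, h]
  ring

theorem weightIntegral_one_of_one_lt {c : ℝ} (hc : -1 < c) (hc1 : 1 < c) :
    weightIntegral hc 1 = Real.pi / (2 * c * (1 + c)) := by
  have hc0 : 0 < c := by linarith
  have hinv : -1 < c⁻¹ := by have := inv_pos.mpr hc0; linarith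
  have hw : ∀ x, weight c x = (c ^ 2)⁻¹ * weight c⁻¹ x := fun x ↦ by
    rw [weight, weight, show (1 + c) ^ 2 - 4 * c * x ^ 2 =
      c ^ 2 * ((1 + c⁻¹) ^ 2 - 4 * c⁻¹ * x ^ 2) by field_simp; ring, div_mul_eq_div_div_swap]
    ring
  have h := weightIntegral_one_of_lt_one hinv (inv_lt_one_of_one_lt₀ hc1)
  change ∫ x in (-1 : ℝ)..1, (1 : ℝ[X]).eval x * weight c⁻¹ x = _ at h
  change ∫ x in (-1 : ℝ)..1, (1 : ℝ[X]).eval x * weight c x = _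
  simp only [eval_one, one_mul] at h ⊢
  simp only [hw, intervalIntegral.integral_const_mul, h]
  field_simp
  ring

/-- Integration against the spectral measure with two symmetric atoms of mass `κ` at `±l`. -/
noncomputable def spectralIntegral {c : ℝ} (hc : -1 < c) (κ l : ℝ) : ℝ[X] →ₗ[ℝ] ℝ :=
  (2 * (1 + c) / Real.pi) • weightIntegral hc + κ • (leval l + leval (-l))

theorem spectralIntegral_chPoly_mul_chPoly {a : ℝ} (ha : 0 < a) (hc : -1 < a ^ 2 - 1) {κ l : ℝ}
    (hmass : spectralIntegral hc κ l 1 = 1)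
    (hroot : κ * (denom (a ^ 2 - 1)).eval l = 0) (n m : ℕ) :
    spectralIntegral hc κ l (chPoly a n * chPoly a m) = if n = m then 1 else 0 := by
  refine apply_chPoly_mul_chPoly ha _ (apply_chPoly ha _ hmass (fun k ↦ ?_) fun p hp ↦ ?_) n m
  · have hroot' : κ * (denom (a ^ 2 - 1)).eval (-l) = 0 := by
      rw [← hroot]; simp [denom]
    have hatom : κ * ((denom (a ^ 2 - 1) * U ℝ k).eval l +
        (denom (a ^ 2 - 1) * U ℝ k).eval (-l)) = 0 := by
      simp only [eval_mul]
      linear_combination (U ℝ k).eval l * hroot + (U ℝ k).eval (-l) * hroot'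
    simp only [spectralIntegral, LinearMap.add_apply, LinearMap.smul_apply, smul_eq_mul,
      leval_apply, weightIntegral_denom_mul_U, hatom]
    split_ifs
    · field_simp
      ring
    · simp
  · have hl : p.eval (-l) = -p.eval l := by simpa using congrArg (eval l) hp
    simp [spectralIntegral, weightIntegral_of_odd hc hp, hl]

end GenChebyshev

/-- Orthogonality of the generalized Chebyshev polynomials with respect to the
spectral measure of the Jacobi operator `H_a`:
`(2a²/π)·∫_{−1}^{1} Ch_n Ch_m √(1 − λ²)/(a⁴ − 4(a² − 1)λ²) dλ = δ_{n,m} − I_a(n,m)`,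
where `I_a(n,m) = 0` for `a ≤ √2` and otherwise is the contribution of the two
atoms at `λ_± = ±a²/(2√(a² − 1))`, each of mass `(a² − 2)/(2(a² − 1))`. -/
theorem stmt8 (a : ℝ) (ha : 0 < a) (n m : ℕ) :
    2 * a ^ 2 / Real.pi *
        ∫ x in (-1 : ℝ)..1,
          Ch a x n * Ch a x m * Real.sqrt (1 - x ^ 2) /
            (a ^ 4 - 4 * (a ^ 2 - 1) * x ^ 2) =
      (if n = m then (1 : ℝ) else 0) -
        (if a ≤ Real.sqrt 2 then (0 : ℝ)
          else (a ^ 2 - 2) / (2 * (a ^ 2 - 1)) *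
            (Ch a (a ^ 2 / (2 * Real.sqrt (a ^ 2 - 1))) n *
                Ch a (a ^ 2 / (2 * Real.sqrt (a ^ 2 - 1))) m +
              Ch a (-(a ^ 2 / (2 * Real.sqrt (a ^ 2 - 1)))) n *
                Ch a (-(a ^ 2 / (2 * Real.sqrt (a ^ 2 - 1)))) m)) := by
  have hc : -1 < a ^ 2 - 1 := by have := pow_pos ha 2; linarith
  have hint : ∀ κ l : ℝ, GenChebyshev.spectralIntegral hc κ l
      (GenChebyshev.chPoly a n * GenChebyshev.chPoly a m) =
      2 * a ^ 2 / Real.pi * (∫ x in (-1 : ℝ)..1, Ch a x n * Ch a x m * Real.sqrt (1 - x ^ 2) /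
        (a ^ 4 - 4 * (a ^ 2 - 1) * x ^ 2)) +
      κ * (Ch a l n * Ch a l m + Ch a (-l) n * Ch a (-l) m) := fun κ l ↦ by
    simp only [GenChebyshev.spectralIntegral, LinearMap.add_apply, LinearMap.smul_apply,
      smul_eq_mul, leval_apply, eval_mul, GenChebyshev.eval_chPoly, add_sub_cancel]
    congr 2
    refine integral_congr fun x _ ↦ ?_
    simp only [eval_mul, GenChebyshev.eval_chPoly, GenChebyshev.weight]
    rw [mul_div_assoc]
    ring_nf
  by_cases ha2 : a ≤ √2
  · rw [if_pos ha2]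
    have hc1 : a ^ 2 - 1 ≤ 1 := by
      have := (Real.le_sqrt ha.le (by norm_num)).mp ha2
      linarith
    have hmass : GenChebyshev.spectralIntegral hc 0 0 1 = 1 := by
      have h1 : GenChebyshev.weightIntegral hc 1 = Real.pi / (2 * (1 + (a ^ 2 - 1))) := by
        rcases hc1.lt_or_eq with h | h
        · exact GenChebyshev.weightIntegral_one_of_lt_one hc h
        · simp only [h, GenChebyshev.weightIntegral_one_one]
          norm_num
      simp only [GenChebyshev.spectralIntegral, LinearMap.add_apply, LinearMap.smul_apply,
        smul_eq_mul, h1]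
      field_simp
      simp
    have h := GenChebyshev.spectralIntegral_chPoly_mul_chPoly ha hc hmass (by simp) n m
    rw [hint] at h
    linarith
  · rw [if_neg ha2]
    have hc1 : 1 < a ^ 2 - 1 := by
      have := (Real.sqrt_lt' ha).mp (not_le.mp ha2)
      linarith
    have hc0 : a ^ 2 - 1 ≠ 0 := by linarith
    have hmass : GenChebyshev.spectralIntegral hc ((a ^ 2 - 2) / (2 * (a ^ 2 - 1)))
        (a ^ 2 / (2 * √(a ^ 2 - 1))) 1 = 1 := by
      simp only [GenChebyshev.spectralIntegral, LinearMap.add_apply, LinearMap.smul_apply,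
        smul_eq_mul, GenChebyshev.weightIntegral_one_of_one_lt hc hc1, leval_apply, eval_one,
        add_sub_cancel]
      field_simp
      ring
    have h := GenChebyshev.spectralIntegral_chPoly_mul_chPoly ha hc hmass (by
      have hs : √(a ^ 2 - 1) ^ 2 = a ^ 2 - 1 := Real.sq_sqrt (by linarith)
      simp only [GenChebyshev.denom, eval_sub, eval_mul, eval_C, eval_pow, eval_X, div_pow,
        mul_pow, hs, add_sub_cancel]
      field_simp
      ring) n m
    rw [hint] at h
    linarith
end

section
/- Let a ∈ (0, √2] and for n ∈ ℕ set κ_n(a) = (2a²/π)·∫_{−1}^{1} λ^n·√(1 − λ²)/(a⁴ − 4(a² − 1)λ²) dλ. Then for every real ζ with |ζ| < 1, the series Σ_{n=0}^{∞} κ_n(a)·ζ^n converges and equals 2/(a²·√(1 − ζ²) + 2 − a²). -/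
open MeasureTheory Set Filter Topology

/-- On `[-1, 1]` the semicircle density divided by the quadratic `1 - x² + s²x²` is integrable. -/
lemma intervalIntegrable_sqrt_one_sub_sq_div (s : ℝ) :
    IntervalIntegrable (fun x : ℝ => √(1 - x ^ 2) / (1 - x ^ 2 + s ^ 2 * x ^ 2)) volume (-1) 1 := by
  have harcsin : IntervalIntegrable (fun x : ℝ => 1 / √(1 - x ^ 2)) volume (-1) 1 := by
    refine intervalIntegral.intervalIntegrable_deriv_of_nonneg
      Real.continuous_arcsin.continuousOn (fun x hx => ?_) (fun x _ => by positivity)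
    norm_num at hx
    exact Real.hasDerivAt_arcsin hx.1.ne' hx.2.ne
  refine harcsin.mono_fun' (by fun_prop : Measurable _).aestronglyMeasurable ?_
  refine (ae_restrict_iff' measurableSet_uIoc).2 (Eventually.of_forall fun x hx => ?_)
  rw [uIoc_of_le (by norm_num)] at hx
  have hx2 : 0 ≤ 1 - x ^ 2 := by nlinarith [hx.1, hx.2]
  have hsx : 0 ≤ s ^ 2 * x ^ 2 := by positivity
  beta_reduce
  rw [Real.norm_of_nonneg (by positivity)]
  rcases hx2.eq_or_lt with h | h
  · simp [← h]
  · rw [div_le_div_iff₀ (by positivity) (by positivity), Real.mul_self_sqrt hx2]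
    linarith

lemma one_sub_sq_pos_of_mem_Ioo {x : ℝ} (hx : x ∈ Ioo (-1 : ℝ) 1) : 0 < 1 - x ^ 2 := by
  nlinarith [hx.1, hx.2]

lemma hasDerivAt_sqrt_one_sub_sq {x : ℝ} (hx : x ∈ Ioo (-1 : ℝ) 1) :
    HasDerivAt (fun x : ℝ => √(1 - x ^ 2)) (-x / √(1 - x ^ 2)) x := by
  have h := (((hasDerivAt_id x).pow 2).const_sub 1).sqrt (one_sub_sq_pos_of_mem_Ioo hx).ne'
  refine h.congr_deriv ?_
  have : √(1 - x ^ 2) ≠ 0 := (Real.sqrt_pos.2 (one_sub_sq_pos_of_mem_Ioo hx)).ne'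
  simp
  field_simp

lemma hasDerivAt_arctan_mul_div_sqrt (s : ℝ) {x : ℝ} (hx : x ∈ Ioo (-1 : ℝ) 1) :
    HasDerivAt (fun x : ℝ => Real.arctan (s * x / √(1 - x ^ 2)))
      (s / (√(1 - x ^ 2) * (1 - x ^ 2 + s ^ 2 * x ^ 2))) x := by
  have hp := one_sub_sq_pos_of_mem_Ioo hx
  have hr : 0 < √(1 - x ^ 2) := Real.sqrt_pos.2 hp
  have hr2 : √(1 - x ^ 2) ^ 2 = 1 - x ^ 2 := Real.sq_sqrt hp.le
  have h := (((hasDerivAt_id x).const_mul s).div (hasDerivAt_sqrt_one_sub_sq hx) hr.ne').arctan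
  refine h.congr_deriv ?_
  simp only [id, Pi.div_apply]
  have hD : 1 - x ^ 2 + s ^ 2 * x ^ 2 ≠ 0 := by positivity
  generalize √(1 - x ^ 2) = r at hr hr2 ⊢
  rw [← hr2] at hD ⊢
  have hD' : r ^ 2 + (s * x) ^ 2 ≠ 0 := by rwa [mul_pow]
  field_simp
  linear_combination s * hr2

lemma tendsto_mul_arctan_nhdsLT_one {s : ℝ} (hs : 0 ≤ s) :
    Tendsto (fun x : ℝ => s * Real.arctan (s * x / √(1 - x ^ 2))) (𝓝[<] 1)
      (𝓝 (s * (Real.pi / 2))) := by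
  rcases hs.eq_or_lt with rfl | hs
  · simp
  refine Tendsto.const_mul s ((tendsto_nhds_of_tendsto_nhdsWithin
    Real.tendsto_arctan_atTop).comp ?_)
  have hroot : Tendsto (fun x : ℝ => √(1 - x ^ 2)) (𝓝[<] 1) (𝓝[>] 0) := by
    refine tendsto_nhdsWithin_iff.2 ⟨?_, ?_⟩
    · have : Continuous fun x : ℝ => √(1 - x ^ 2) := by fun_prop
      simpa using (this.tendsto 1).mono_left nhdsWithin_le_nhds
    · filter_upwards [Ioo_mem_nhdsLT (show (-1 : ℝ) < 1 by norm_num)] with x hx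
      exact Real.sqrt_pos.2 (one_sub_sq_pos_of_mem_Ioo hx)
  have hnum : Tendsto (fun x : ℝ => s * x) (𝓝[<] 1) (𝓝 s) := by
    have : Continuous fun x : ℝ => s * x := by fun_prop
    simpa using (this.tendsto 1).mono_left nhdsWithin_le_nhds
  simpa only [div_eq_mul_inv, Pi.inv_apply] using hnum.pos_mul_atTop hs hroot.inv_tendsto_nhdsGT_zero

lemma tendsto_neg_nhdsGT_of_odd {f : ℝ → ℝ} (hodd : ∀ x, f (-x) = -f x) {a l : ℝ}
    (h : Tendsto f (𝓝[<] a) (𝓝 l)) : Tendsto f (𝓝[>] (-a)) (𝓝 (-l)) := by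
  have hneg : Tendsto (fun x : ℝ => -x) (𝓝[>] (-a)) (𝓝[<] a) := by
    simpa using tendsto_neg_nhdsGT (a := -a)
  refine (h.comp hneg).neg.congr fun x => ?_
  simp [hodd]

/-- If the antiderivative on `(-1, 1)` is odd, the integral is twice its left limit at `1`. -/
lemma integral_eq_two_mul_of_odd_primitive {f f' : ℝ → ℝ} {l : ℝ}
    (hodd : ∀ x, f (-x) = -f x) (hderiv : ∀ x ∈ Ioo (-1 : ℝ) 1, HasDerivAt f (f' x) x)
    (hint : IntervalIntegrable f' volume (-1) 1) (h : Tendsto f (𝓝[<] 1) (𝓝 l)) :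
    ∫ x in (-1 : ℝ)..1, f' x = 2 * l := by
  rw [intervalIntegral.integral_eq_sub_of_hasDerivAt_of_tendsto (by norm_num) hderiv hint
    (tendsto_neg_nhdsGT_of_odd hodd h) h]
  ring

lemma one_sub_sq_add_pos {t x : ℝ} (ht : 0 < t) (hx : x ∈ Icc (-1 : ℝ) 1) :
    0 < 1 - x ^ 2 + t ^ 2 * x ^ 2 := by
  have hx2 : 0 ≤ 1 - x ^ 2 := by nlinarith [hx.1, hx.2]
  rcases eq_or_ne x 0 with rfl | h
  · simp
  · positivity

/-- The integral over `[-1, 1]` of the semicircle density over two quadratics `1 - x² + s²x²`. -/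
theorem integral_sqrt_one_sub_sq_div_mul {s t : ℝ} (hs : 0 ≤ s) (ht : 0 < t) :
    ∫ x in (-1 : ℝ)..1, √(1 - x ^ 2) / (1 - x ^ 2 + s ^ 2 * x ^ 2) *
      (1 - x ^ 2 + t ^ 2 * x ^ 2)⁻¹ = Real.pi / (s + t) := by
  have hint : IntervalIntegrable (fun x : ℝ => √(1 - x ^ 2) / (1 - x ^ 2 + s ^ 2 * x ^ 2) *
      (1 - x ^ 2 + t ^ 2 * x ^ 2)⁻¹) volume (-1) 1 := by
    refine (intervalIntegrable_sqrt_one_sub_sq_div s).mul_continuousOn ?_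
    refine ContinuousOn.inv₀ (by fun_prop) fun x hx => ?_
    rw [uIcc_of_le (by norm_num)] at hx
    exact (one_sub_sq_add_pos ht hx).ne'
  have hst : 0 < s + t := by positivity
  rcases eq_or_ne s t with rfl | hne
  · rw [integral_eq_two_mul_of_odd_primitive (l := (s * (Real.pi / 2)) / (2 * s ^ 2))
      (f := fun x => (s * Real.arctan (s * x / √(1 - x ^ 2)) +
        s ^ 2 * x * √(1 - x ^ 2) / (1 - x ^ 2 + s ^ 2 * x ^ 2)) / (2 * s ^ 2)) ?_ ?_ hint ?_]
    · field_simp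
      ring
    · intro x
      simp only [mul_neg, neg_div, Real.arctan_neg, even_two, Even.neg_pow, neg_mul]
      ring
    · intro x hx
      have hp := one_sub_sq_pos_of_mem_Ioo hx
      have hr : 0 < √(1 - x ^ 2) := Real.sqrt_pos.2 hp
      have hr2 : √(1 - x ^ 2) ^ 2 = 1 - x ^ 2 := Real.sq_sqrt hp.le
      have hD : 1 - x ^ 2 + s ^ 2 * x ^ 2 ≠ 0 := by positivity
      have hquad : HasDerivAt (fun x : ℝ => 1 - x ^ 2 + s ^ 2 * x ^ 2)
          (-(2 * x) + s ^ 2 * (2 * x)) x := by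
        have h := ((hasDerivAt_pow 2 x).const_sub 1).add ((hasDerivAt_pow 2 x).const_mul (s ^ 2))
        exact h.congr_deriv (by simp)
      have hlin : HasDerivAt (fun x : ℝ => s ^ 2 * x) (s ^ 2) x := by
        simpa using (hasDerivAt_id x).const_mul (s ^ 2)
      have h := (((hasDerivAt_arctan_mul_div_sqrt s hx).const_mul s).add
        ((hlin.mul (hasDerivAt_sqrt_one_sub_sq hx)).div hquad hD)).div_const (2 * s ^ 2)
      refine h.congr_deriv ?_
      simp only [Pi.mul_apply]
      generalize √(1 - x ^ 2) = r at hr hr2 ⊢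
      have hx2 : x ^ 2 = 1 - r ^ 2 := by linarith
      field_simp
      simp only [hx2]
      ring
    · have hcont : ContinuousAt
          (fun x : ℝ => s ^ 2 * x * √(1 - x ^ 2) / (1 - x ^ 2 + s ^ 2 * x ^ 2)) 1 :=
        ContinuousAt.div (by fun_prop) (by fun_prop) (by simpa using ht.ne')
      have h := hcont.tendsto.mono_left (nhdsWithin_le_nhds (s := Iio 1))
      simpa using ((tendsto_mul_arctan_nhdsLT_one hs).add h).div_const (2 * s ^ 2)
  · have hsub : s - t ≠ 0 := sub_ne_zero.2 hne
    have hsq : s ^ 2 - t ^ 2 ≠ 0 := by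
      rw [sq_sub_sq]
      exact mul_ne_zero hst.ne' hsub
    rw [integral_eq_two_mul_of_odd_primitive
      (l := (s * (Real.pi / 2) - t * (Real.pi / 2)) / (s ^ 2 - t ^ 2))
      (f := fun x => (s * Real.arctan (s * x / √(1 - x ^ 2)) -
        t * Real.arctan (t * x / √(1 - x ^ 2))) / (s ^ 2 - t ^ 2)) ?_ ?_ hint ?_]
    · rw [sq_sub_sq]
      field_simp
    · intro x
      simp only [mul_neg, neg_div, Real.arctan_neg, even_two, Even.neg_pow]
      ring
    · intro x hx
      have hp := one_sub_sq_pos_of_mem_Ioo hx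
      have hr : 0 < √(1 - x ^ 2) := Real.sqrt_pos.2 hp
      have hr2 : √(1 - x ^ 2) ^ 2 = 1 - x ^ 2 := Real.sq_sqrt hp.le
      have hDs : 1 - x ^ 2 + s ^ 2 * x ^ 2 ≠ 0 := by positivity
      have hDt : 1 - x ^ 2 + t ^ 2 * x ^ 2 ≠ 0 := by positivity
      have h := (((hasDerivAt_arctan_mul_div_sqrt s hx).const_mul s).sub
        ((hasDerivAt_arctan_mul_div_sqrt t hx).const_mul t)).div_const (s ^ 2 - t ^ 2)
      refine h.congr_deriv ?_
      generalize √(1 - x ^ 2) = r at hr hr2 ⊢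
      field_simp
      linear_combination -(s ^ 2 - t ^ 2) * hr2
    · exact ((tendsto_mul_arctan_nhdsLT_one hs).sub
        (tendsto_mul_arctan_nhdsLT_one ht.le)).div_const _

lemma one_sub_mul_pos_of_abs_lt_one {ζ x : ℝ} (hζ : |ζ| < 1) (hx : x ∈ Icc (-1 : ℝ) 1) :
    0 < 1 - ζ * x := by
  have h : |ζ * x| < 1 := by
    rw [abs_mul]
    exact mul_lt_one_of_nonneg_of_lt_one_left (abs_nonneg _) hζ (abs_le.2 hx)
  linarith [(abs_lt.1 h).2]

/-- For an even weight on `[-1, 1]` the kernel `1 / (1 - ζx)` can be replaced by its even part. -/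
lemma integral_even_mul_inv_one_sub_mul {w : ℝ → ℝ} (hw : ∀ x, w (-x) = w x)
    (hint : IntervalIntegrable w volume (-1) 1) {ζ : ℝ} (hζ : |ζ| < 1) :
    ∫ x in (-1 : ℝ)..1, w x * (1 - ζ * x)⁻¹ =
      ∫ x in (-1 : ℝ)..1, w x * (1 - ζ ^ 2 * x ^ 2)⁻¹ := by
  have hi : ∀ {η : ℝ}, |η| < 1 →
      IntervalIntegrable (fun x => w x * (1 - η * x)⁻¹) volume (-1) 1 := fun {η} hη => by
    refine hint.mul_continuousOn (ContinuousOn.inv₀ (by fun_prop) fun x hx => ?_)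
    rw [uIcc_of_le (by norm_num)] at hx
    exact (one_sub_mul_pos_of_abs_lt_one hη hx).ne'
  have hneg : |-ζ| < 1 := by rwa [abs_neg]
  have hreflect : ∫ x in (-1 : ℝ)..1, w x * (1 - -ζ * x)⁻¹ =
      ∫ x in (-1 : ℝ)..1, w x * (1 - ζ * x)⁻¹ := by
    have h := intervalIntegral.integral_comp_neg (a := -1) (b := 1)
      (fun x : ℝ => w x * (1 - ζ * x)⁻¹)
    simpa [hw] using h
  have hsum : ∫ x in (-1 : ℝ)..1, (w x * (1 - ζ * x)⁻¹ + w x * (1 - -ζ * x)⁻¹) =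
      ∫ x in (-1 : ℝ)..1, 2 * (w x * (1 - ζ ^ 2 * x ^ 2)⁻¹) := by
    refine intervalIntegral.integral_congr fun x hx => ?_
    rw [uIcc_of_le (by norm_num)] at hx
    have h₁ := one_sub_mul_pos_of_abs_lt_one hζ hx
    have h₂ := one_sub_mul_pos_of_abs_lt_one hneg hx
    have h₃ : 1 - ζ ^ 2 * x ^ 2 = (1 - ζ * x) * (1 - -ζ * x) := by ring
    simp only [h₃]
    have h₄ : (1 - ζ * x) + (1 - -ζ * x) = 2 := by ring
    generalize 1 - -ζ * x = q at *
    generalize 1 - ζ * x = p at *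
    field_simp
    linear_combination w x * h₄
  rw [intervalIntegral.integral_add (hi hζ) (hi hneg), hreflect,
    intervalIntegral.integral_const_mul] at hsum
  linarith

/-- The moment generating series of an integrable weight on `[-1, 1]`. -/
lemma hasSum_integral_pow_mul {w : ℝ → ℝ} (hint : IntervalIntegrable w volume (-1) 1) {ζ : ℝ}
    (hζ : |ζ| < 1) :
    HasSum (fun n : ℕ => (∫ x in (-1 : ℝ)..1, x ^ n * w x) * ζ ^ n)
      (∫ x in (-1 : ℝ)..1, w x * (1 - ζ * x)⁻¹) := by
  have hgeom := hasSum_geometric_of_lt_one (abs_nonneg ζ) hζ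
  have hmain : HasSum (fun n : ℕ => ∫ x in (-1 : ℝ)..1, w x * (ζ * x) ^ n)
      (∫ x in (-1 : ℝ)..1, w x * (1 - ζ * x)⁻¹) := by
    refine intervalIntegral.hasSum_integral_of_dominated_convergence
      (fun n x => |w x| * |ζ| ^ n) (fun n => ?_) (fun n => ?_) ?_ ?_ ?_
    · exact hint.def'.aestronglyMeasurable.mul
        (by fun_prop : Continuous fun x : ℝ => (ζ * x) ^ n).aestronglyMeasurable
    · refine Eventually.of_forall fun x hx => ?_
      rw [uIoc_of_le (by norm_num)] at hx
      rw [Real.norm_eq_abs, abs_mul, abs_pow, abs_mul]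
      have : |x| ≤ 1 := abs_le.2 ⟨hx.1.le, hx.2⟩
      gcongr
      exact mul_le_of_le_one_right (abs_nonneg _) this
    · exact Eventually.of_forall fun x _ => hgeom.summable.mul_left _
    · simp only [tsum_mul_left]
      exact hint.abs.mul_const _
    · refine Eventually.of_forall fun x hx => ?_
      rw [uIoc_of_le (by norm_num)] at hx
      refine (hasSum_geometric_of_abs_lt_one ?_).mul_left _
      rw [abs_mul]
      exact mul_lt_one_of_nonneg_of_lt_one_left (abs_nonneg _) hζ (abs_le.2 ⟨hx.1.le, hx.2⟩)
  convert hmain using 2 with n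
  rw [← intervalIntegral.integral_mul_const]
  congr 1
  ext x
  ring

/-- Generating function of the moments `κ_n(a)` of the spectral measure of `H_a` for
`a ∈ (0, √2]`: for `|ζ| < 1`, `Σ κ_n(a) ζ^n = 2/(a²√(1 − ζ²) + 2 − a²)`. -/
theorem stmt15 (a : ℝ) (ha : a ∈ Set.Ioc 0 (Real.sqrt 2)) (ζ : ℝ) (hζ : |ζ| < 1) :
    let κ : ℕ → ℝ := fun n =>
      2 * a ^ 2 / Real.pi *
        ∫ x in (-1 : ℝ)..1,
          x ^ n * Real.sqrt (1 - x ^ 2) / (a ^ 4 - 4 * (a ^ 2 - 1) * x ^ 2)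
    HasSum (fun n : ℕ => κ n * ζ ^ n)
      (2 / (a ^ 2 * Real.sqrt (1 - ζ ^ 2) + 2 - a ^ 2)) := by
  intro κ
  have ha0 : 0 < a := ha.1
  have ha2 : a ^ 2 ≤ 2 := (Real.le_sqrt ha0.le (by norm_num)).1 ha.2
  have hζ2 : 0 < 1 - ζ ^ 2 := one_sub_sq_pos_of_mem_Ioo (abs_lt.1 hζ)
  set s : ℝ := (2 - a ^ 2) / a ^ 2 with hs_def
  set t : ℝ := √(1 - ζ ^ 2)
  have hs : 0 ≤ s := div_nonneg (by linarith) (by positivity)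
  have ht : 0 < t := Real.sqrt_pos.2 hζ2
  have ht2 : t ^ 2 = 1 - ζ ^ 2 := Real.sq_sqrt hζ2.le
  have hint := intervalIntegrable_sqrt_one_sub_sq_div s
  have hκ : ∀ n, κ n = 2 / (a ^ 2 * Real.pi) *
      ∫ x in (-1 : ℝ)..1, x ^ n * (√(1 - x ^ 2) / (1 - x ^ 2 + s ^ 2 * x ^ 2)) := by
    intro n
    simp only [κ, ← intervalIntegral.integral_const_mul]
    congr 1
    ext x
    have hden : a ^ 4 - 4 * (a ^ 2 - 1) * x ^ 2 = a ^ 4 * (1 - x ^ 2 + s ^ 2 * x ^ 2) := by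
      rw [hs_def]
      field_simp
      ring
    rw [hden]
    field_simp
  have hvalue : ∫ x in (-1 : ℝ)..1, √(1 - x ^ 2) / (1 - x ^ 2 + s ^ 2 * x ^ 2) *
      (1 - ζ * x)⁻¹ = Real.pi / (s + t) := by
    rw [integral_even_mul_inv_one_sub_mul (fun x => by simp) hint hζ,
      ← integral_sqrt_one_sub_sq_div_mul hs ht]
    congr 1
    ext x
    rw [ht2]
    ring_nf
  have h := (hasSum_integral_pow_mul hint hζ).mul_left (2 / (a ^ 2 * Real.pi))
  rw [hvalue] at h
  simp only [hκ, mul_assoc]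
  have hsa : a ^ 2 * t + 2 - a ^ 2 = a ^ 2 * (s + t) := by
    rw [hs_def]
    field_simp
    ring
  have hst : 0 < s + t := by positivity
  have hlimit : 2 / (a ^ 2 * t + 2 - a ^ 2) =
      2 / (a ^ 2 * Real.pi) * (Real.pi / (s + t)) := by
    rw [hsa]
    field_simp
  rw [hlimit]
  exact h
end
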